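/- For p ≥ 2, the Ullman density f_p is differentiable at 0 with f_p'(0) = 0. -/

import Mathlib

/-!
Write `q = p - 2 ≥ 0`. Integrating by parts with `√(t² - x²)' = t / √(t² - x²)`, for `|x| < 1`,
`∫_{|x|}^1 t^{p-1}/√(t² - x²) dt = √(1 - x²) - q ∫_0^1 t^{q-1} √(t² - x²) dt`
(`integral_by_parts`), where the last integral may start at `0` because `Real.sqrt` vanishes on
negative numbers. The right-hand side no longer has a moving endpoint or a singularity at `t = |x|`.
For `q > 0` it is differentiated at `x = 0` under the integral sign: for each `t > 0` the integrand
has `x`-derivative `0` at `0`, and `|√(t² - x²) - t| ≤ |x|` (`abs_sqrt_sub_le`) dominates the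
difference quotients by the integrable function `t^{q-1}` (`hasDerivAt_sqrt_integral`).
For `q = 0` the last integral has coefficient `0`.
-/

open MeasureTheory

/-- The Ullman density `f_p(x) = (p/π) ∫_{|x|}^1 t^{p-1}/√(t²-x²) dt`. -/
noncomputable def ullman (p x : ℝ) : ℝ :=
  (p / Real.pi) * ∫ t in Set.Ioo |x| 1, t ^ (p - 1) / Real.sqrt (t ^ 2 - x ^ 2)

theorem abs_sqrt_sub_le {t : ℝ} (ht : 0 < t) (x : ℝ) :
    |Real.sqrt (t ^ 2 - x ^ 2) - t| ≤ |x| := by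
  have h1 : Real.sqrt (t ^ 2 - x ^ 2) ≤ t := by
    rw [Real.sqrt_le_left ht.le]
    nlinarith [sq_nonneg x]
  have h2 : t - |x| ≤ Real.sqrt (t ^ 2 - x ^ 2) := by
    rcases le_total t |x| with h | h
    · linarith [Real.sqrt_nonneg (t ^ 2 - x ^ 2)]
    · apply Real.le_sqrt_of_sq_le
      nlinarith [abs_nonneg x, sq_abs x]
  rw [abs_le]
  constructor <;> linarith [abs_nonneg x]

/-- Only the difference quotients based at `0` are dominated: `x ↦ √(t² - x²)` is not Lipschitz
near `x = t` or `x = -t`, so the bound has to be centred at the point of differentiation. -/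
theorem hasDerivAt_sqrt_integral {q : ℝ} (hq : 0 < q) :
    HasDerivAt (fun x : ℝ => ∫ t in Set.Ioo (0 : ℝ) 1, t ^ (q - 1) * Real.sqrt (t ^ 2 - x ^ 2))
      0 0 := by
  have hb : IntegrableOn (fun t : ℝ => t ^ (q - 1)) (Set.Ioo 0 1) := by
    rw [intervalIntegral.integrableOn_Ioo_rpow_iff one_pos]
    linarith
  have hmeas : ∀ x : ℝ, Measurable (fun t : ℝ => t ^ (q - 1) * Real.sqrt (t ^ 2 - x ^ 2)) := by
    intro x
    fun_prop
  have hint : IntegrableOn (fun t : ℝ => t ^ (q - 1) * Real.sqrt (t ^ 2 - (0 : ℝ) ^ 2))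
      (Set.Ioo 0 1) := by
    refine Integrable.mono' hb (hmeas 0).aestronglyMeasurable ?_
    refine (ae_restrict_iff' measurableSet_Ioo).2 (ae_of_all _ fun t ht => ?_)
    have h0 : (0 : ℝ) ≤ t ^ (q - 1) := Real.rpow_nonneg ht.1.le _
    rw [show t ^ 2 - (0 : ℝ) ^ 2 = t ^ 2 by ring, Real.sqrt_sq ht.1.le, Real.norm_eq_abs,
      abs_of_nonneg (mul_nonneg h0 ht.1.le)]
    exact mul_le_of_le_one_right h0 ht.2.le
  have key := (hasFDerivAt_integral_of_dominated_loc_of_lip' (𝕜 := ℝ)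
    (μ := volume.restrict (Set.Ioo (0 : ℝ) 1))
    (F := fun (x t : ℝ) => t ^ (q - 1) * Real.sqrt (t ^ 2 - x ^ 2))
    (F' := fun _ => (0 : ℝ →L[ℝ] ℝ)) (x₀ := (0 : ℝ)) (bound := fun t => t ^ (q - 1))
    (Metric.ball_mem_nhds 0 one_pos)
    (fun x _ => (hmeas x).aestronglyMeasurable) hint
    aestronglyMeasurable_const ?_ hb ?_).2
  · simpa using key.hasDerivAt
  · refine (ae_restrict_iff' measurableSet_Ioo).2 (ae_of_all _ fun t ht x _ => ?_)
    have h0 : (0 : ℝ) ≤ t ^ (q - 1) := Real.rpow_nonneg ht.1.le _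
    rw [show t ^ 2 - (0 : ℝ) ^ 2 = t ^ 2 by ring, Real.sqrt_sq ht.1.le, ← mul_sub, norm_mul,
      Real.norm_eq_abs, Real.norm_eq_abs, Real.norm_eq_abs, abs_of_nonneg h0, sub_zero]
    exact mul_le_mul_of_nonneg_left (abs_sqrt_sub_le ht.1 x) h0
  · refine (ae_restrict_iff' measurableSet_Ioo).2 (ae_of_all _ fun t ht => ?_)
    have hs : t ^ 2 - (0 : ℝ) ^ 2 ≠ 0 := by
      have := pow_pos ht.1 2
      simpa using this.ne'
    have h := ((((hasDerivAt_id (0 : ℝ)).pow 2).const_sub (t ^ 2)).sqrt hs).const_mul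
      (t ^ (q - 1))
    have h' : HasDerivAt (fun x : ℝ => t ^ (q - 1) * Real.sqrt (t ^ 2 - x ^ 2)) 0 0 := by
      simpa using h
    simpa using h'.hasFDerivAt

/-- Both sides come from integrating the derivative of `t ↦ t^{p-2} √(t² - x²)` over `[|x|, 1]`; the
primitive vanishes at `t = |x|`. -/
theorem integral_by_parts {p x : ℝ} (hp : 2 ≤ p) (hx : |x| < 1) :
    ∫ t in Set.Ioo |x| 1, t ^ (p - 1) / Real.sqrt (t ^ 2 - x ^ 2) =
      Real.sqrt (1 - x ^ 2) -
        (p - 2) * ∫ t in Set.Ioo (0 : ℝ) 1, t ^ (p - 2 - 1) * Real.sqrt (t ^ 2 - x ^ 2) := by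
  set A : ℝ → ℝ := fun t => t ^ (p - 1) / Real.sqrt (t ^ 2 - x ^ 2) with hA
  set B : ℝ → ℝ := fun t => (p - 2) * (t ^ (p - 2 - 1) * Real.sqrt (t ^ 2 - x ^ 2)) with hB
  have hmA : Measurable A := by rw [hA]; fun_prop
  have hmB : Measurable B := by rw [hB]; fun_prop
  have hpos : ∀ t ∈ Set.Ioo |x| 1, 0 < t := fun t ht => (abs_nonneg x).trans_lt ht.1
  have hA0 : ∀ t ∈ Set.Ioo |x| 1, 0 ≤ A t := fun t ht =>
    div_nonneg (Real.rpow_nonneg (hpos t ht).le _) (Real.sqrt_nonneg _)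
  have hB0 : ∀ t ∈ Set.Ioo |x| 1, 0 ≤ B t := fun t ht =>
    mul_nonneg (by linarith) (mul_nonneg (Real.rpow_nonneg (hpos t ht).le _) (Real.sqrt_nonneg _))
  have hcont : ContinuousOn (fun t : ℝ => t ^ (p - 2) * Real.sqrt (t ^ 2 - x ^ 2))
      (Set.Icc |x| 1) := by
    have h1 : Continuous (fun t : ℝ => t ^ (p - 2)) :=
      Real.continuous_rpow_const (by linarith)
    exact (h1.mul (by fun_prop)).continuousOn
  have hder : ∀ t ∈ Set.Ioo |x| 1,
      HasDerivAt (fun t : ℝ => t ^ (p - 2) * Real.sqrt (t ^ 2 - x ^ 2)) (A t + B t) t := by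
    intro t ht
    have ht0 := hpos t ht
    have hs : 0 < t ^ 2 - x ^ 2 := by
      nlinarith [ht.1, abs_nonneg x, sq_abs x]
    have h := (Real.hasDerivAt_rpow_const (p := p - 2) (Or.inl ht0.ne')).mul
      ((((hasDerivAt_id t).pow 2).sub_const (x ^ 2)).sqrt hs.ne')
    refine h.congr_deriv ?_
    have e : t ^ (p - 1) = t ^ (p - 2) * t := by
      rw [show p - 1 = (p - 2) + 1 by ring, Real.rpow_add_one ht0.ne']
    have := Real.sqrt_pos.2 hs
    simp only [hA, hB, e]
    simp
    field_simp
    ring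
  have hsum : IntegrableOn (fun t => A t + B t) (Set.Ioc |x| 1) :=
    intervalIntegral.integrableOn_deriv_of_nonneg hcont hder
      fun t ht => add_nonneg (hA0 t ht) (hB0 t ht)
  have hsum' : IntegrableOn (fun t => A t + B t) (Set.Ioo |x| 1) :=
    hsum.mono_set Set.Ioo_subset_Ioc_self
  -- Both summands are nonnegative, so integrability passes from the sum to each of them.
  have hiA : IntegrableOn A (Set.Ioo |x| 1) := by
    refine Integrable.mono' hsum' hmA.aestronglyMeasurable ?_
    refine (ae_restrict_iff' measurableSet_Ioo).2 (ae_of_all _ fun t ht => ?_)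
    rw [Real.norm_eq_abs, abs_of_nonneg (hA0 t ht)]
    linarith [hB0 t ht]
  have hiB : IntegrableOn B (Set.Ioo |x| 1) := by
    refine Integrable.mono' hsum' hmB.aestronglyMeasurable ?_
    refine (ae_restrict_iff' measurableSet_Ioo).2 (ae_of_all _ fun t ht => ?_)
    rw [Real.norm_eq_abs, abs_of_nonneg (hB0 t ht)]
    linarith [hA0 t ht]
  have hftc : ∫ t in Set.Ioo |x| 1, (A t + B t) = Real.sqrt (1 - x ^ 2) := by
    have h := intervalIntegral.integral_eq_sub_of_hasDerivAt_of_le hx.le hcont hder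
      ((intervalIntegrable_iff_integrableOn_Ioc_of_le hx.le).2 hsum)
    rw [intervalIntegral.integral_of_le hx.le, integral_Ioc_eq_integral_Ioo] at h
    rw [h]
    simp
  have hBext : ∫ t in Set.Ioo |x| 1, B t = ∫ t in Set.Ioo (0 : ℝ) 1, B t := by
    refine (setIntegral_eq_of_subset_of_forall_sdiff_eq_zero measurableSet_Ioo
      (Set.Ioo_subset_Ioo_left (abs_nonneg x)) ?_).symm
    rintro t ⟨ht, hnt⟩
    have hle : t ≤ |x| := by
      by_contra! hlt
      exact hnt ⟨hlt, ht.2⟩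
    have hs : t ^ 2 - x ^ 2 ≤ 0 := by
      nlinarith [ht.1, abs_nonneg x, sq_abs x]
    simp [hB, Real.sqrt_eq_zero_of_nonpos hs]
  rw [integral_add hiA hiB, hBext] at hftc
  rw [← integral_const_mul]
  linarith

theorem ullman_deriv_zero (p : ℝ) (hp : 2 ≤ p) :
    HasDerivAt (ullman p) 0 0 := by
  have hev : ullman p =ᶠ[nhds 0] fun x => (p / Real.pi) * (Real.sqrt (1 - x ^ 2) -
      (p - 2) * ∫ t in Set.Ioo (0 : ℝ) 1, t ^ (p - 2 - 1) * Real.sqrt (t ^ 2 - x ^ 2)) := by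
    filter_upwards [Metric.ball_mem_nhds (0 : ℝ) one_pos] with x hx
    rw [ullman, integral_by_parts hp (by simpa using hx)]
  have hsqrt : HasDerivAt (fun x : ℝ => Real.sqrt (1 - x ^ 2)) 0 0 := by
    have h := (((hasDerivAt_id (0 : ℝ)).pow 2).const_sub 1).sqrt (by simp)
    simpa using h
  have hJ : HasDerivAt (fun x : ℝ => (p - 2) *
      ∫ t in Set.Ioo (0 : ℝ) 1, t ^ (p - 2 - 1) * Real.sqrt (t ^ 2 - x ^ 2)) 0 0 := by
    rcases hp.eq_or_lt with rfl | hlt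
    · simpa using hasDerivAt_const (0 : ℝ) (0 : ℝ)
    · simpa using (hasDerivAt_sqrt_integral (sub_pos.2 hlt)).const_mul (p - 2)
  refine HasDerivAt.congr_of_eventuallyEq ?_ hev
  simpa using (hsqrt.sub hJ).const_mul (p / Real.pi)
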